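/- Let K be a convex body in ℝⁿ with B₂ⁿ ⊆ K, where B₂ⁿ is the closed Euclidean unit ball, and let r : ∂K → ℝ be the rolling function. Then for every t with 0 ≤ t ≤ 1 the set {x ∈ ∂K : r(x) ≥ t} is closed, and (1 − t)^{n−1} · H^{n−1}(∂K) ≤ H^{n−1}({x ∈ ∂K : r(x) ≥ t}), where H^{n−1} denotes the (n−1)-dimensional Hausdorff measure. -/

import Mathlib

/-!
The idea is to compare `∂K` with the centres of the balls of radius `t` that roll inside `K`.

Let `t < 1` and `y ∈ ∂K` with outer unit normal `N`. Since `B ⊆ K`, convexity gives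
`(1 - t) y + t B ⊆ K`. Move the centre of this ball from `w = (1 - t) y` in the direction `N` as far
as possible inside `K`; the last ball, with centre `z = w + s N`, touches `∂K` at a point `x`, so
`r(x) ≥ t` (`exists_touching`). At `x` the outer unit normal `N_x` of `K` satisfies
`x - z = t N_x` (`sub_eq_smul_normal`). Two applications of monotonicity of normals give
`‖w - w'‖ ≤ ‖z - z'‖ ≤ ‖x - x'‖` for two such triples, so that `y ↦ x` expands distances by at least
the factor `1 - t` (`touching_expanding`), and the Hausdorff measure estimate follows.

For `t = 1` the estimate is trivial unless `n = 1`; there, every boundary point is touched by a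
ball of radius `1` (`one_le_rollingFunction_of_dim_one`).

Closedness holds because the supremum defining `r` is attained, which exhibits the superlevel set as
a projection of a compact subset of `K × K`.
-/

open MeasureTheory

/-- The rolling function of a convex body `K`:
`r(x) = sup {‖x − z‖ : z ∈ K and the closed ball around z of radius ‖x − z‖ is in K}`. -/
noncomputable def rollingFunction {n : ℕ} (K : Set (EuclideanSpace ℝ (Fin n)))
    (x : EuclideanSpace ℝ (Fin n)) : ℝ :=
  sSup {d : ℝ | ∃ z ∈ K, d = ‖x - z‖ ∧ Metric.closedBall z ‖x - z‖ ⊆ K}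

/-- The closed ball of radius `t ≥ 0` is parametrised by the unit ball; this form is also usable for
`t = 0`. -/
lemma closedBall_subset_iff_smul {n : ℕ} {K : Set (EuclideanSpace ℝ (Fin n))}
    {z : EuclideanSpace ℝ (Fin n)} {t : ℝ} (ht : 0 ≤ t) :
    Metric.closedBall z t ⊆ K ↔
      ∀ u ∈ Metric.closedBall (0 : EuclideanSpace ℝ (Fin n)) 1, z + t • u ∈ K := by
  constructor
  · intro h u hu
    apply h
    rw [mem_closedBall_zero_iff] at hu
    rw [mem_closedBall_iff_norm, add_sub_cancel_left, norm_smul, Real.norm_of_nonneg ht]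
    nlinarith
  · intro h v hv
    rw [mem_closedBall_iff_norm] at hv
    rcases ht.eq_or_lt with rfl | ht
    · have hvz : v = z := by
        have := norm_le_zero_iff.1 hv
        exact sub_eq_zero.1 this
      have := h 0 (by simp)
      simpa [hvz] using this
    · have := h (t⁻¹ • (v - z)) (by
        rw [mem_closedBall_zero_iff, norm_smul, norm_inv, Real.norm_of_nonneg ht.le,
          inv_mul_le_iff₀ ht]
        simpa using hv)
      rwa [smul_inv_smul₀ ht.ne', add_sub_cancel] at this

/-- The pairs `(x, z)` for which the ball around `z` through `x` lies in `K` form a closed set. -/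
lemma isClosed_touching {n : ℕ} {K : Set (EuclideanSpace ℝ (Fin n))} (hK : IsClosed K) :
    IsClosed {p : EuclideanSpace ℝ (Fin n) × EuclideanSpace ℝ (Fin n) |
      Metric.closedBall p.2 ‖p.1 - p.2‖ ⊆ K} := by
  simp only [closedBall_subset_iff_smul (norm_nonneg _), Set.ofPred_forall]
  refine isClosed_iInter fun u => isClosed_iInter fun _ => hK.preimage ?_
  fun_prop

lemma le_rollingFunction {n : ℕ} {K : Set (EuclideanSpace ℝ (Fin n))} (hK : IsCompact K)
    {x z : EuclideanSpace ℝ (Fin n)} (hz : z ∈ K)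
    (hball : Metric.closedBall z ‖x - z‖ ⊆ K) : ‖x - z‖ ≤ rollingFunction K x := by
  have hbdd : BddAbove ((fun z => ‖x - z‖) '' K) :=
    (hK.image (by fun_prop)).bddAbove
  refine le_csSup (hbdd.mono ?_) ⟨z, hz, rfl, hball⟩
  rintro _ ⟨z, hz, rfl, -⟩
  exact ⟨z, hz, rfl⟩

/-- The supremum in the definition of the rolling function is attained. -/
lemma exists_eq_rollingFunction {n : ℕ} {K : Set (EuclideanSpace ℝ (Fin n))} (hK : IsCompact K)
    {x : EuclideanSpace ℝ (Fin n)} (hx : x ∈ K) :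
    ∃ z ∈ K, rollingFunction K x = ‖x - z‖ ∧ Metric.closedBall z ‖x - z‖ ⊆ K := by
  have hcl : IsClosed {z | Metric.closedBall z ‖x - z‖ ⊆ K} :=
    (isClosed_touching hK.isClosed).preimage (f := fun z => (x, z)) (by fun_prop)
  have hcomp : IsCompact {d : ℝ | ∃ z ∈ K, d = ‖x - z‖ ∧ Metric.closedBall z ‖x - z‖ ⊆ K} := by
    convert (hK.inter_right hcl).image (f := fun z => ‖x - z‖) (by fun_prop) using 1
    ext d
    constructor
    · rintro ⟨z, hz, rfl, h⟩
      exact ⟨z, ⟨hz, h⟩, rfl⟩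
    · rintro ⟨z, ⟨hz, h⟩, rfl⟩
      exact ⟨z, hz, rfl, h⟩
  exact hcomp.sSup_mem ⟨0, x, hx, by simp, by simpa using hx⟩

lemma isClosed_superlevel {n : ℕ} {K : Set (EuclideanSpace ℝ (Fin n))} (hK : IsCompact K) (t : ℝ) :
    IsClosed {x | x ∈ frontier K ∧ t ≤ rollingFunction K x} := by
  have hF : IsCompact (frontier K) := hK.of_isClosed_subset isClosed_frontier
    hK.isClosed.frontier_subset
  have hcl : IsClosed {p : EuclideanSpace ℝ (Fin n) × EuclideanSpace ℝ (Fin n) |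
      t ≤ ‖p.1 - p.2‖} := isClosed_le continuous_const (by fun_prop)
  have hcomp := (((hF.prod hK).inter_right (isClosed_touching hK.isClosed)).inter_right hcl).image
    continuous_fst
  convert hcomp.isClosed using 1
  ext x
  constructor
  · rintro ⟨hx, hr⟩
    obtain ⟨z, hz, hrz, hb⟩ := exists_eq_rollingFunction hK (hK.isClosed.frontier_subset hx)
    exact ⟨(x, z), ⟨⟨⟨hx, hz⟩, hb⟩, hr.trans hrz.le⟩, rfl⟩
  · rintro ⟨⟨x, z⟩, ⟨⟨⟨hx, hz⟩, hb⟩, ht⟩, rfl⟩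
    exact ⟨hx, le_trans ht (le_rollingFunction hK hz hb)⟩

/-- Supporting hyperplane theorem: an outer unit normal exists at every boundary point. -/
lemma exists_unit_normal {n : ℕ} {K : Set (EuclideanSpace ℝ (Fin n))} (hconv : Convex ℝ K)
    (hint : (interior K).Nonempty) {x : EuclideanSpace ℝ (Fin n)} (hx : x ∈ frontier K) :
    ∃ N : EuclideanSpace ℝ (Fin n), ‖N‖ = 1 ∧ ∀ v ∈ K, inner ℝ N v ≤ inner ℝ N x := by
  obtain ⟨f, hf⟩ := geometric_hahn_banach_open_point hconv.interior isOpen_interior hx.2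
  obtain ⟨a, ha⟩ := hint
  set M := (InnerProductSpace.toDual ℝ (EuclideanSpace ℝ (Fin n))).symm f with hM
  have hMf : ∀ v, inner ℝ M v = f v := fun v => InnerProductSpace.toDual_symm_apply
  have hM0 : M ≠ 0 := by
    intro h0
    have h1 := hf a ha
    rw [← hMf, ← hMf, h0] at h1
    simp at h1
  refine ⟨‖M‖⁻¹ • M, norm_smul_inv_norm hM0, fun v hv => ?_⟩
  have hv' : v ∈ closure (interior K) := by
    rw [hconv.closure_interior_eq_closure_of_nonempty_interior ⟨a, ha⟩]
    exact subset_closure hv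
  have hle : f v ≤ f x :=
    closure_minimal (fun u hu => (hf u hu).le) (isClosed_le f.continuous continuous_const) hv'
  rw [real_inner_smul_left, real_inner_smul_left, hMf, hMf]
  gcongr

/-- If the ball of radius `t` around `z` lies in `K` and contains the boundary point `x`, then
`x - z` is `t` times any outer unit normal at `x`. -/
lemma sub_eq_smul_normal {n : ℕ} {K : Set (EuclideanSpace ℝ (Fin n))}
    {x z N : EuclideanSpace ℝ (Fin n)} {t : ℝ} (ht : 0 ≤ t) (hN : ‖N‖ = 1)
    (hsupp : ∀ v ∈ K, inner ℝ N v ≤ inner ℝ N x) (hball : Metric.closedBall z t ⊆ K)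
    (hxz : ‖x - z‖ ≤ t) : x - z = t • N := by
  have h1 := hsupp _ ((closedBall_subset_iff_smul ht).1 hball N (by simp [hN]))
  rw [inner_add_right, real_inner_smul_right, real_inner_self_eq_norm_sq, hN] at h1
  -- Equality in the Cauchy–Schwarz inequality, read off from the expanded square.
  have h2 : ‖(x - z) - t • N‖ ^ 2 ≤ 0 := by
    rw [norm_sub_sq_real, real_inner_smul_right, norm_smul, hN, Real.norm_of_nonneg ht,
      real_inner_comm, inner_sub_right]
    nlinarith [norm_nonneg (x - z)]
  have h3 : ‖(x - z) - t • N‖ = 0 := by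
    nlinarith [norm_nonneg ((x - z) - t • N)]
  exact sub_eq_zero.1 (norm_eq_zero.1 h3)

/-- Pushing the ball of radius `t` around `(1 - t) y` in the direction `N` until it meets the
boundary of `K`. -/
lemma exists_touching {n : ℕ} {K : Set (EuclideanSpace ℝ (Fin n))} (hcomp : IsCompact K)
    (hconv : Convex ℝ K) (hKball : Metric.closedBall (0 : EuclideanSpace ℝ (Fin n)) 1 ⊆ K)
    {t : ℝ} (ht0 : 0 ≤ t) (ht1 : t ≤ 1) {y N : EuclideanSpace ℝ (Fin n)} (hy : y ∈ K)
    (hN : ‖N‖ = 1) :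
    ∃ s : ℝ, 0 ≤ s ∧ Metric.closedBall ((1 - t) • y + s • N) t ⊆ K ∧
      ∃ x ∈ frontier K, ‖x - ((1 - t) • y + s • N)‖ ≤ t := by
  set A : Set ℝ := {s | 0 ≤ s ∧ Metric.closedBall ((1 - t) • y + s • N) t ⊆ K} with hA
  have hA0 : (0 : ℝ) ∈ A := by
    refine ⟨le_rfl, (closedBall_subset_iff_smul ht0).2 fun u hu => ?_⟩
    rw [zero_smul, add_zero]
    exact hconv hy (hKball hu) (by linarith) ht0 (by ring)
  have hAcl : IsClosed A := by
    have : A = Set.Ici 0 ∩ ⋂ u ∈ Metric.closedBall (0 : EuclideanSpace ℝ (Fin n)) 1,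
        (fun s : ℝ => (1 - t) • y + s • N + t • u) ⁻¹' K := by
      ext s
      simp only [hA, closedBall_subset_iff_smul ht0, Set.mem_ofPred_eq, Set.mem_inter_iff,
        Set.mem_iInter, Set.mem_preimage, Set.mem_Ici]
    rw [this]
    refine isClosed_Ici.inter (isClosed_iInter fun u => isClosed_iInter fun _ =>
      hcomp.isClosed.preimage ?_)
    fun_prop
  have hAbdd : BddAbove A := by
    obtain ⟨R, hR⟩ := hcomp.isBounded.exists_norm_le
    refine ⟨R + ‖(1 - t) • y‖, fun s hs => ?_⟩
    have h1 := hR _ (hs.2 (Metric.mem_closedBall_self ht0))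
    have h2 : ‖s • N‖ = s := by rw [norm_smul, hN, mul_one, Real.norm_of_nonneg hs.1]
    have h3 := norm_sub_le ((1 - t) • y + s • N) ((1 - t) • y)
    rw [add_sub_cancel_left, h2] at h3
    linarith
  have hmem : sSup A ∈ A := hAcl.csSup_mem ⟨0, hA0⟩ hAbdd
  refine ⟨sSup A, hmem.1, hmem.2, ?_⟩
  by_contra! hno
  have hsub : Metric.closedBall ((1 - t) • y + sSup A • N) t ⊆ interior K := by
    intro v hv
    by_contra hvi
    have hv1 := hno v ⟨subset_closure (hmem.2 hv), hvi⟩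
    rw [mem_closedBall_iff_norm] at hv
    linarith
  obtain ⟨δ, hδ, hδK⟩ :=
    (isCompact_closedBall _ _).exists_cthickening_subset_open isOpen_interior hsub
  have hmem' : sSup A + δ ∈ A := by
    refine ⟨by linarith [hmem.1], fun v hv => interior_subset (hδK ?_)⟩
    refine Metric.mem_cthickening_of_dist_le v (v - δ • N) δ _ ?_ ?_
    · rw [mem_closedBall_iff_norm] at hv ⊢
      convert hv using 2
      module
    · rw [dist_eq_norm, sub_sub_cancel, norm_smul, hN, mul_one, Real.norm_of_nonneg hδ.le]
  linarith [le_csSup hAbdd hmem']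

/-- The touching points are at least `1 - t` times as far apart as the points `y`, `y'` from which
they arise. The inner product inequalities express that `N`, `N'` are normal to `K` at `y`, `y'`
and that `M`, `M'` are normal to the inner parallel body at the centres of the balls. -/
lemma touching_expanding {n : ℕ} {y y' x x' N N' M M' : EuclideanSpace ℝ (Fin n)} {t s s' : ℝ}
    (ht0 : 0 ≤ t) (ht1 : t ≤ 1) (hs : 0 ≤ s) (hs' : 0 ≤ s')
    (hN : inner ℝ N y' ≤ inner ℝ N y) (hN' : inner ℝ N' y ≤ inner ℝ N' y')
    (hx : x - ((1 - t) • y + s • N) = t • M) (hx' : x' - ((1 - t) • y' + s' • N') = t • M')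
    (hM : inner ℝ M ((1 - t) • y' + s' • N') ≤ inner ℝ M ((1 - t) • y + s • N))
    (hM' : inner ℝ M' ((1 - t) • y + s • N) ≤ inner ℝ M' ((1 - t) • y' + s' • N')) :
    (1 - t) * ‖y - y'‖ ≤ ‖x - x'‖ := by
  have h1t : 0 ≤ 1 - t := sub_nonneg.2 ht1
  -- A vector `a` with `⟪a, b - a⟫ ≥ 0` is no longer than `b`.
  have key : ∀ a c : EuclideanSpace ℝ (Fin n), 0 ≤ inner ℝ c a → ‖a‖ ≤ ‖a + c‖ := by
    intro a c h
    have h1 := norm_add_sq_real a c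
    rw [real_inner_comm] at h1
    exact le_of_sq_le_sq (by nlinarith [sq_nonneg ‖c‖]) (norm_nonneg _)
  set z := (1 - t) • y + s • N with hz
  set z' := (1 - t) • y' + s' • N' with hz'
  have h1 : ‖(1 - t) • (y - y')‖ ≤ ‖z - z'‖ := by
    have := key ((1 - t) • (y - y')) (s • N - s' • N') (by
      rw [real_inner_smul_right, inner_sub_left, real_inner_smul_left, real_inner_smul_left,
        inner_sub_right, inner_sub_right]
      have h2 := mul_nonneg hs (sub_nonneg.2 hN)
      have h3 := mul_nonneg hs' (sub_nonneg.2 hN')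
      exact mul_nonneg h1t (by linarith))
    convert this using 2
    rw [hz, hz']
    module
  have h2 : ‖z - z'‖ ≤ ‖x - x'‖ := by
    have := key (z - z') (t • M - t • M') (by
      rw [inner_sub_left, real_inner_smul_left, real_inner_smul_left, inner_sub_right,
        inner_sub_right]
      have h2 := mul_nonneg ht0 (sub_nonneg.2 hM)
      have h3 := mul_nonneg ht0 (sub_nonneg.2 hM')
      linarith)
    convert this using 2
    rw [← hx, ← hx']
    module
  rw [norm_smul, Real.norm_of_nonneg h1t] at h1
  exact h1.trans h2

/-- In dimension one a boundary point `x` is touched by the ball of radius `1` centred at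
`x - x / ‖x‖`, which lies in the segment from `-x / ‖x‖` to `x`. -/
lemma one_le_rollingFunction_of_dim_one {K : Set (EuclideanSpace ℝ (Fin 1))} (hcomp : IsCompact K)
    (hconv : Convex ℝ K) (hKball : Metric.closedBall (0 : EuclideanSpace ℝ (Fin 1)) 1 ⊆ K)
    {x : EuclideanSpace ℝ (Fin 1)} (hx : x ∈ frontier K) : 1 ≤ rollingFunction K x := by
  have hxK := hcomp.isClosed.frontier_subset hx
  have hx1 : 1 ≤ ‖x‖ := by
    by_contra! h
    refine hx.2 (interior_maximal (Metric.ball_subset_closedBall.trans hKball) Metric.isOpen_ball ?_)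
    simpa using h
  have hx0 : 0 < ‖x‖ := by linarith
  have hxne : x ≠ 0 := norm_pos_iff.1 hx0
  set e := ‖x‖⁻¹ • x with he
  have he1 : ‖e‖ = 1 := norm_smul_inv_norm hxne
  have hxe : x = ‖x‖ • e := by rw [he, smul_inv_smul₀ hx0.ne']
  have hene : e ≠ 0 := by
    rintro h
    simp [h] at he1
  have hball : Metric.closedBall (x - e) ‖x - (x - e)‖ ⊆ K := by
    rw [sub_sub_cancel, he1, closedBall_subset_iff_smul zero_le_one]
    intro u hu
    obtain ⟨c, rfl⟩ := exists_smul_eq_of_finrank_eq_one (finrank_euclideanSpace_fin) hene u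
    rw [mem_closedBall_zero_iff, norm_smul, he1, mul_one, Real.norm_eq_abs, abs_le] at hu
    have hneg : -e ∈ K := hKball (by simp [he1])
    have hpos : 0 < ‖x‖ + 1 := by linarith
    have := hconv hxK hneg (a := (‖x‖ + c) / (‖x‖ + 1)) (b := (1 - c) / (‖x‖ + 1))
      (div_nonneg (by linarith) hpos.le) (div_nonneg (by linarith) hpos.le) (by field_simp; ring)
    convert this using 1
    rw [hxe]
    simp only [norm_smul, he1, norm_norm, mul_one]
    match_scalars
    field_simp
    ring
  have hz : x - e ∈ K := hball (Metric.mem_closedBall_self (norm_nonneg _))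
  have := le_rollingFunction hcomp hz hball
  rwa [sub_sub_cancel, he1] at this

/-- Schütt–Werner: for a convex body `K` containing the unit ball and `0 ≤ t ≤ 1`, the
set `{x ∈ ∂K : r(x) ≥ t}` is closed and its `(n−1)`-dimensional Hausdorff measure is at
least `(1−t)^{n−1}` times that of `∂K`. -/
theorem rollingFunction_superlevel_measure {n : ℕ}
    (K : Set (EuclideanSpace ℝ (Fin n))) (hKcomp : IsCompact K) (hKconv : Convex ℝ K)
    (hKball : Metric.closedBall (0 : EuclideanSpace ℝ (Fin n)) 1 ⊆ K)
    (t : ℝ) (ht0 : 0 ≤ t) (ht1 : t ≤ 1) :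
    IsClosed {x | x ∈ frontier K ∧ t ≤ rollingFunction K x} ∧
    ENNReal.ofReal ((1 - t) ^ (n - 1)) * μH[(n : ℝ) - 1] (frontier K)
      ≤ μH[(n : ℝ) - 1] {x | x ∈ frontier K ∧ t ≤ rollingFunction K x} := by
  refine ⟨isClosed_superlevel hKcomp t, ?_⟩
  rcases Nat.eq_zero_or_pos n with rfl | hn
  · -- In dimension `0` every set is clopen, so `∂K` is empty.
    simp
  have hd : 0 ≤ (n : ℝ) - 1 := by
    have : (1 : ℝ) ≤ n := by exact_mod_cast hn
    linarith
  have hint : (interior K).Nonempty :=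
    ⟨0, interior_maximal (Metric.ball_subset_closedBall.trans hKball) Metric.isOpen_ball (by simp)⟩
  rcases ht1.eq_or_lt with rfl | ht1
  · rcases Nat.lt_or_ge 1 n with hn1 | hn1
    · have : n - 1 ≠ 0 := by omega
      simp [this]
    · obtain rfl : n = 1 := by omega
      simp only [Nat.sub_self, pow_zero, ENNReal.ofReal_one, one_mul]
      exact measure_mono fun x hx =>
        ⟨hx, one_le_rollingFunction_of_dim_one hKcomp hKconv hKball hx⟩
  choose N hN1 hNsupp using
    fun y : frontier K => exists_unit_normal hKconv hint y.2
  choose s hs hsball x hx hxz using fun y : frontier K =>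
    exists_touching hKcomp hKconv hKball ht0 ht1.le (hKcomp.isClosed.frontier_subset y.2) (hN1 y)
  have htM : ∀ y, x y - ((1 - t) • (y : EuclideanSpace ℝ (Fin n)) + s y • N y)
      = t • N ⟨x y, hx y⟩ := fun y =>
    sub_eq_smul_normal ht0 (hN1 ⟨x y, hx y⟩) (hNsupp ⟨x y, hx y⟩) (hsball y) (hxz y)
  -- The outer normal at the touching point of `y` is normal to the inner parallel body at the centre
  -- belonging to `y`: test it against the ball belonging to `y'`.
  have hM : ∀ y y' : frontier K,
      inner ℝ (N ⟨x y, hx y⟩) ((1 - t) • (y' : EuclideanSpace ℝ (Fin n)) + s y' • N y') ≤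
      inner ℝ (N ⟨x y, hx y⟩) ((1 - t) • (y : EuclideanSpace ℝ (Fin n)) + s y • N y) := by
    intro y y'
    have h1 := hNsupp ⟨x y, hx y⟩ _
      ((closedBall_subset_iff_smul ht0).1 (hsball y') (N ⟨x y, hx y⟩) (by simp [hN1]))
    have h2 : x y = ((1 - t) • (y : EuclideanSpace ℝ (Fin n)) + s y • N y)
        + t • N ⟨x y, hx y⟩ := by
      rw [← htM y]
      abel
    have h3 : inner ℝ (N ⟨x y, hx y⟩) (x y) =
        inner ℝ (N ⟨x y, hx y⟩) (((1 - t) • (y : EuclideanSpace ℝ (Fin n)) + s y • N y)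
          + t • N ⟨x y, hx y⟩) := congrArg _ h2
    rw [inner_add_right] at h1 h3
    have h4 : inner ℝ (N ⟨x y, hx y⟩) ((⟨x y, hx y⟩ : frontier K) : EuclideanSpace ℝ (Fin n)) =
      inner ℝ (N ⟨x y, hx y⟩) (x y) := rfl
    linarith
  have h1t : 0 < 1 - t := by linarith
  have hanti : AntilipschitzWith (Real.toNNReal (1 - t)⁻¹) x := by
    refine AntilipschitzWith.of_le_mul_dist fun y y' => ?_
    rw [Real.coe_toNNReal _ (inv_nonneg.2 h1t.le), Subtype.dist_eq, dist_eq_norm, dist_eq_norm,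
      le_inv_mul_iff₀ h1t]
    exact touching_expanding ht0 ht1.le (hs y) (hs y')
      (hNsupp y _ (hKcomp.isClosed.frontier_subset y'.2))
      (hNsupp y' _ (hKcomp.isClosed.frontier_subset y.2)) (htM y) (htM y') (hM y y') (hM y' y)
  have himage : x '' Set.univ ⊆ {x | x ∈ frontier K ∧ t ≤ rollingFunction K x} := by
    rintro _ ⟨y, -, rfl⟩
    have hnorm : ‖x y - ((1 - t) • (y : EuclideanSpace ℝ (Fin n)) + s y • N y)‖ = t := by
      rw [htM y, norm_smul, hN1, mul_one, Real.norm_of_nonneg ht0]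
    have := le_rollingFunction (x := x y) hKcomp
      (hsball y (Metric.mem_closedBall_self ht0)) (by rw [hnorm]; exact hsball y)
    exact ⟨hx y, by rwa [hnorm] at this⟩
  have hmeas : μH[(n : ℝ) - 1] (frontier K) = μH[(n : ℝ) - 1] (Set.univ : Set (frontier K)) := by
    have hiso : Isometry (Subtype.val : frontier K → EuclideanSpace ℝ (Fin n)) :=
      isometry_subtype_coe
    rw [← hiso.hausdorffMeasure_image (Or.inl hd), Set.image_univ, Subtype.range_coe]
  have hle := (hanti.le_hausdorffMeasure_image hd Set.univ).trans
    (mul_le_mul_right (measure_mono himage) _)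
  rw [← hmeas] at hle
  have hconst : ENNReal.ofReal ((1 - t) ^ (n - 1)) *
      ((Real.toNNReal (1 - t)⁻¹ : NNReal) : ENNReal) ^ ((n : ℝ) - 1) = 1 := by
    have hcast : (n : ℝ) - 1 = ((n - 1 : ℕ) : ℝ) := by
      rw [Nat.cast_sub hn, Nat.cast_one]
    rw [hcast, ENNReal.rpow_natCast, ENNReal.ofReal_pow h1t.le, ← mul_pow]
    change (ENNReal.ofReal (1 - t) * ENNReal.ofReal (1 - t)⁻¹) ^ (n - 1) = 1
    rw [← ENNReal.ofReal_mul h1t.le, mul_inv_cancel₀ h1t.ne', ENNReal.ofReal_one, one_pow]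
  calc _ ≤ _ := mul_le_mul_right hle _
    _ = _ := by rw [← mul_assoc, hconst, one_mul]
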